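/- arXiv:2102.04711 — 9 statements merged into one kernel-verified Lean document; each statement's English description precedes it below -/
import Mathlib

section
/- Let R be a commutative ring, I an ideal of R, and r ∈ R. Then r is integral over I if and only if there exists a positive integer n such that (I + (r))^n = I·(I + (r))^{n−1}, where (r) denotes the principal ideal generated by r. -/
/-- An element `r` of a commutative ring `R` is *integral over an ideal* `I` if there
exist `n ≥ 1` and elements `aᵢ ∈ Iⁱ` (for `1 ≤ i ≤ n`) such that
`r ^ n + a₁ r ^ (n-1) + ⋯ + aₙ₋₁ r + aₙ = 0`. -/
def IsIntegralOverIdeal {R : Type*} [CommRing R] (I : Ideal R) (r : R) : Prop :=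
  ∃ n : ℕ, 0 < n ∧ ∃ a : ℕ → R, (∀ i ∈ Finset.Icc 1 n, a i ∈ I ^ i) ∧
    r ^ n + ∑ i ∈ Finset.Icc 1 n, a i * r ^ (n - i) = 0

/-!
Let `J = I + (r)`. Addition of ideals is idempotent, so the binomial theorem for ideals has no
coefficients: `I * Jⁿ` is the sum of the `Iⁱ (r)ⁿ⁺¹⁻ⁱ` with `1 ≤ i ≤ n + 1`, and `Jⁿ⁺¹` has the one
further summand `(r)ⁿ⁺¹`. Hence `Jⁿ⁺¹ = I * Jⁿ` says that `rⁿ⁺¹ ∈ I * Jⁿ`, and, up to sign, the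
elements of the first sum are the lower-order parts of equations of integral dependence.
-/

section IdemCommSemiring

variable {α : Type*} [IdemCommSemiring α] (a b : α) (n : ℕ)

theorem idem_add_pow : (a + b) ^ n = ∑ i ∈ Finset.range (n + 1), a ^ i * b ^ (n - i) := by
  rw [add_pow]
  refine Finset.sum_congr rfl fun i hi ↦ ?_
  have choose_ne_zero : n.choose i ≠ 0 := (Nat.choose_pos (Finset.mem_range_succ_iff.1 hi)).ne'
  rw [natCast_eq_one choose_ne_zero, mul_one]

theorem mul_idem_add_pow :
    a * (a + b) ^ n = ∑ i ∈ Finset.Icc 1 (n + 1), a ^ i * b ^ (n + 1 - i) := by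
  rw [idem_add_pow, Finset.mul_sum, Finset.range_eq_Ico, ← Finset.Ico_add_one_right_eq_Icc,
    ← Finset.sum_Ico_add' _ 0 (n + 1) 1]
  simp only [pow_succ', mul_assoc, Nat.add_sub_add_right]

theorem idem_add_pow_succ : (a + b) ^ (n + 1) = a * (a + b) ^ n + b ^ (n + 1) := by
  rw [mul_idem_add_pow, idem_add_pow, Finset.sum_range_eq_add_Ico _ (n + 1).add_one_pos,
    Finset.Ico_add_one_right_eq_Icc, pow_zero, one_mul, Nat.sub_zero, add_comm]

end IdemCommSemiring

theorem mem_sum_mul_span_singleton_iff {R ι : Type*} [CommSemiring R] {s : Finset ι}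
    {A : ι → Ideal R} {f : ι → R} {x : R} :
    x ∈ ∑ i ∈ s, A i * Ideal.span {f i} ↔
      ∃ a : ι → R, (∀ i ∈ s, a i ∈ A i) ∧ ∑ i ∈ s, a i * f i = x := by
  constructor
  · intro hx
    rw [Ideal.sum_eq_sup, Finset.sup_eq_iSup, Submodule.mem_iSup_finset_iff_exists_sum] at hx
    obtain ⟨y, rfl⟩ := hx
    choose a ha hay using fun i ↦ Ideal.mem_mul_span_singleton.1 (y i).2
    exact ⟨a, fun i _ ↦ ha i, Finset.sum_congr rfl fun i _ ↦ hay i⟩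
  · rintro ⟨a, ha, rfl⟩
    refine sum_mem fun i hi ↦ ?_
    have summand_le : A i * Ideal.span {f i} ≤ ∑ j ∈ s, A j * Ideal.span {f j} :=
      Finset.single_le_sum_of_canonicallyOrdered (f := fun j ↦ A j * Ideal.span {f j}) hi
    exact summand_le (Ideal.mul_mem_mul (ha i hi) (Ideal.mem_span_singleton_self (f i)))

theorem mem_mul_add_span_singleton_pow_iff {R : Type*} [CommSemiring R] {I : Ideal R} {r x : R}
    {n : ℕ} :
    x ∈ I * (I + Ideal.span {r}) ^ n ↔
      ∃ a : ℕ → R, (∀ i ∈ Finset.Icc 1 (n + 1), a i ∈ I ^ i) ∧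
        ∑ i ∈ Finset.Icc 1 (n + 1), a i * r ^ (n + 1 - i) = x := by
  simp only [mul_idem_add_pow, Ideal.span_singleton_pow, mem_sum_mul_span_singleton_iff]

theorem add_span_singleton_pow_succ_eq_iff {R : Type*} [CommSemiring R] {I : Ideal R} {r : R}
    {n : ℕ} :
    (I + Ideal.span {r}) ^ (n + 1) = I * (I + Ideal.span {r}) ^ n ↔
      r ^ (n + 1) ∈ I * (I + Ideal.span {r}) ^ n := by
  rw [idem_add_pow_succ, add_eq_left_iff_le, Ideal.span_singleton_pow,
    Ideal.span_singleton_le_iff_mem]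

theorem integral_over_ideal_iff_pow_eq {R : Type*} [CommRing R] (I : Ideal R) (r : R) :
    IsIntegralOverIdeal I r ↔
      ∃ n : ℕ, 0 < n ∧ (I + Ideal.span {r}) ^ n = I * (I + Ideal.span {r}) ^ (n - 1) := by
  refine exists_congr fun n ↦ and_congr_right fun hn ↦ ?_
  obtain ⟨n, rfl⟩ := Nat.exists_eq_add_one.2 hn
  rw [Nat.add_sub_cancel, add_span_singleton_pow_succ_eq_iff, ← neg_mem_iff,
    mem_mul_add_span_singleton_pow_iff]
  simp only [add_eq_zero_iff_eq_neg']
end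

section
/- Let R be an integral domain with fraction field K, let P be a prime ideal of R, and let a be a nonzero element of K. Then P·R[a] ≠ R[a] or P·R[a⁻¹] ≠ R[a⁻¹], where R[a] denotes the subring of K generated by R and a, and P·R[a] denotes the ideal of R[a] generated by the image of P. -/
/-!
Choose a valuation subring `V` of `K` that contains `R` and whose maximal ideal contains the image
of the ideal. One of `a` and `a⁻¹` lies in `V`, and the subring it generates over `R` is then
contained in `V`, so the extension of the ideal to that subring is contained in the contraction of
the maximal ideal of `V`.
-/

section Ring

variable {R A : Type*} [CommRing R] [Ring A] [Algebra R A]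

lemma adjoin_toSubring_le_iff {s : Set A} {S : Subring A} :
    (Algebra.adjoin R s).toSubring ≤ S ↔ (algebraMap R A).range ≤ S ∧ s ⊆ S := by
  rw [Algebra.adjoin_eq_ring_closure, Subring.closure_le, Set.union_subset_iff,
    ← RingHom.coe_range, SetLike.coe_subset_coe]

lemma map_algebraMap_bot_eq_top_iff [FaithfulSMul R A] {I : Ideal R} :
    I.map (algebraMap R (⊥ : Subalgebra R A)) = ⊤ ↔ I = ⊤ := by
  have bijective : Function.Bijective (algebraMap R (⊥ : Subalgebra R A)) :=
    (Algebra.botEquivOfInjective (FaithfulSMul.algebraMap_injective R A)).symm.bijective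
  rw [← Ideal.comap_eq_top_iff (f := algebraMap R (⊥ : Subalgebra R A)),
    Ideal.comap_map_of_bijective _ bijective]

end Ring

section Field

variable {R K : Type*} [CommRing R] [Field K] [Algebra R K]

lemma map_algebraMap_ne_top_iff_exists_valuationSubring {A : Subalgebra R K} {I : Ideal R} :
    I.map (algebraMap R A) ≠ ⊤ ↔ ∃ V : ValuationSubring K,
      A.toSubring ≤ V.toSubring ∧ algebraMap R K '' I ⊆ V.nonunits := by
  constructor
  · intro hI
    obtain ⟨V, hAV, hIV⟩ :=
      Ideal.image_subset_nonunits_valuationSubring (A := A.toSubring) (I.map (algebraMap R A)) hI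
    refine ⟨V, hAV, ?_⟩
    rintro _ ⟨r, hr, rfl⟩
    exact hIV ⟨algebraMap R A r, Ideal.mem_map_of_mem _ hr, rfl⟩
  · rintro ⟨V, hAV, hIV⟩
    let inclusion : A →+* V := Subring.inclusion hAV
    have map_le_comap : I.map (algebraMap R A) ≤ (IsLocalRing.maximalIdeal V).comap inclusion := by
      refine Ideal.map_le_iff_le_comap.mpr fun r hr ↦ ?_
      obtain ⟨_, hrV⟩ :=
        V.mem_nonunits_iff_exists_mem_maximalIdeal.mp (hIV (Set.mem_image_of_mem _ hr))
      exact hrV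
    exact ne_top_of_le_ne_top (Ideal.comap_ne_top inclusion Ideal.IsPrime.ne_top') map_le_comap

theorem extension_to_adjoin_proper_general [FaithfulSMul R K] (I : Ideal R) (hI : I ≠ ⊤) (a : K) :
    I.map (algebraMap R (Algebra.adjoin R {a})) ≠ ⊤ ∨
      I.map (algebraMap R (Algebra.adjoin R {a⁻¹})) ≠ ⊤ := by
  obtain ⟨V, hRV, hIV⟩ :=
    map_algebraMap_ne_top_iff_exists_valuationSubring.mp
      (map_algebraMap_bot_eq_top_iff (A := K).not.mpr hI)
  have range_le : (algebraMap R K).range ≤ V.toSubring := by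
    rintro _ ⟨r, rfl⟩
    exact hRV ((⊥ : Subalgebra R K).algebraMap_mem r)
  have adjoin_proper (b : K) (hb : b ∈ V) : I.map (algebraMap R (Algebra.adjoin R {b})) ≠ ⊤ :=
    map_algebraMap_ne_top_iff_exists_valuationSubring.mpr
      ⟨V, adjoin_toSubring_le_iff.mpr ⟨range_le, Set.singleton_subset_iff.mpr hb⟩, hIV⟩
  exact (V.mem_or_inv_mem a).imp (adjoin_proper a) (adjoin_proper a⁻¹)

end Field

/-- Let `R` be an integral domain with fraction field `K`, `P` a prime ideal of `R`
and `a` a nonzero element of `K`. Then the extension of `P` to `R[a]` is proper, or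
the extension of `P` to `R[a⁻¹]` is proper. -/
theorem extension_to_adjoin_proper {R K : Type*} [CommRing R] [IsDomain R] [Field K]
    [Algebra R K] [IsFractionRing R K] (P : Ideal R) (hP : P.IsPrime) (a : K)
    (ha : a ≠ 0) :
    Ideal.map (algebraMap R (Algebra.adjoin R ({a} : Set K))) P ≠ ⊤ ∨
      Ideal.map (algebraMap R (Algebra.adjoin R ({a⁻¹} : Set K))) P ≠ ⊤ :=
  extension_to_adjoin_proper_general P hP.ne_top a
end

section
/- Let R be an integral domain with fraction field K and let v be a valuation on K that is nonnegative on R. If I is a proper v-ideal of R, then the radical √I = {x ∈ R : x^n ∈ I for some positive integer n} is a prime ideal of R. -/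
/-- For a valuation `v` on `K` which is nonnegative on a subring `R` (in multiplicative
notation: `v (algebraMap R K r) ≤ 1` for all `r`), the canonical ring homomorphism from
`R` into the valuation ring `{x : K | v x ≤ 1}` of `v`. -/
def Valuation.nonnegHom {R K Γ₀ : Type*} [CommRing R] [Field K] [Algebra R K]
    [LinearOrderedCommGroupWithZero Γ₀] (v : Valuation K Γ₀)
    (hv : ∀ r : R, v (algebraMap R K r) ≤ 1) : R →+* v.integer where
  toFun r := ⟨algebraMap R K r, hv r⟩
  map_one' := by ext; simp
  map_mul' x y := by ext; simp
  map_zero' := by ext; simp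
  map_add' x y := by ext; simp

/-- An ideal `I` of `R` is a `v`-ideal if it is the contraction of some ideal of the
valuation ring of `v`. -/
def IsVIdeal {R K Γ₀ : Type*} [CommRing R] [Field K] [Algebra R K]
    [LinearOrderedCommGroupWithZero Γ₀] (v : Valuation K Γ₀)
    (hv : ∀ r : R, v (algebraMap R K r) ≤ 1) (I : Ideal R) : Prop :=
  ∃ J : Ideal v.integer, I = J.comap (Valuation.nonnegHom v hv)

theorem mem_of_mul_mem_of_dvd_of_isRadical {A : Type*} [CommSemiring A] {J : Ideal A}
    (hJ : J.IsRadical) {x y : A} (hyx : y ∣ x) (hxy : x * y ∈ J) : x ∈ J := by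
  have x_sq_mem : x ^ 2 ∈ J := J.mem_of_dvd (sq x ▸ mul_dvd_mul_left x hyx) hxy
  exact hJ ⟨2, x_sq_mem⟩

theorem isPrime_of_isRadical_of_preValuationRing {A : Type*} [CommSemiring A]
    [PreValuationRing A] {J : Ideal A} (hJ : J.IsRadical) (hJ_ne_top : J ≠ ⊤) : J.IsPrime where
  ne_top' := hJ_ne_top
  mem_or_mem' {x y} hxy := by
    rcases ValuationRing.dvd_total x y with hdvd | hdvd
    · exact .inr (mem_of_mul_mem_of_dvd_of_isRadical hJ hdvd (mul_comm x y ▸ hxy))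
    · exact .inl (mem_of_mul_mem_of_dvd_of_isRadical hJ hdvd hxy)

theorem isPrime_radical_comap_of_preValuationRing {R A : Type*} [CommSemiring R]
    [CommSemiring A] [PreValuationRing A] (f : R →+* A) {J : Ideal A} (hJ : J.comap f ≠ ⊤) :
    (J.comap f).radical.IsPrime := by
  have J_ne_top : J ≠ ⊤ := fun h ↦ hJ (h ▸ Ideal.comap_top)
  have radical_isPrime : J.radical.IsPrime :=
    isPrime_of_isRadical_of_preValuationRing J.radical_isRadical
      (mt Ideal.radical_eq_top.mp J_ne_top)
  exact J.comap_radical f ▸ radical_isPrime.comap f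

theorem radical_vIdeal_prime_general {R K Γ₀ : Type*} [CommRing R] [Field K] [Algebra R K]
    [LinearOrderedCommGroupWithZero Γ₀] (v : Valuation K Γ₀)
    (hv : ∀ r : R, v (algebraMap R K r) ≤ 1) (I : Ideal R) (hproper : I ≠ ⊤)
    (hI : IsVIdeal v hv I) : I.radical.IsPrime := by
  obtain ⟨J, rfl⟩ := hI
  exact isPrime_radical_comap_of_preValuationRing (Valuation.nonnegHom v hv) hproper

/-- The radical of a proper `v`-ideal is a prime ideal. -/
theorem radical_vIdeal_prime {R K Γ₀ : Type*} [CommRing R] [IsDomain R] [Field K]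
    [Algebra R K] [IsFractionRing R K] [LinearOrderedCommGroupWithZero Γ₀]
    (v : Valuation K Γ₀) (hv : ∀ r : R, v (algebraMap R K r) ≤ 1) (I : Ideal R)
    (hproper : I ≠ ⊤) (hI : IsVIdeal v hv I) : I.radical.IsPrime :=
  radical_vIdeal_prime_general v hv I hproper hI
end

section
/- Let R be an integral domain with fraction field K and let I be an ideal of R. Then the integral closure Ī of I equals the intersection, over all valuation overrings V of R in K, of (I·V) ∩ R, where I·V is the ideal of V generated by I. -/
/-!
In a valuation ring `V` the ideal `I·V` is the union of the principal ideals `a·V` with `a ∈ I`, so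
`r ∈ I·V` means that `v r ≤ v a` for some `a ∈ I`. If instead `v a < v r` for all `a ∈ I`, then in
an equation of integral dependence the leading term `r ^ n` strictly dominates all the others, which
is absurd.

Conversely, for `r ≠ 0` evaluate the Rees algebra `⨁ Iⁱ tⁱ` at `t = 1 / r`; its image in `K` is
`R[I / r]`. If the elements of positive degree generate the unit ideal of the image, then
`1 = ∑ aᵢ / rⁱ` with `aᵢ ∈ Iⁱ`, and clearing denominators yields an equation of integral dependence.
Otherwise some valuation ring containing `R[I / r]` has all the `a / r`, `a ∈ I`, in its maximal
ideal, that is, `v a < v r` for all `a ∈ I`.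
-/

open Polynomial

theorem isIntegralOverIdeal_zero {R : Type*} [CommRing R] (I : Ideal R) :
    IsIntegralOverIdeal I 0 :=
  ⟨1, one_pos, 0, fun _ _ => zero_mem _, by simp⟩

section ValuationRing

theorem mem_ideal_span_iff_exists_dvd {A : Type*} [CommSemiring A] [PreValuationRing A] {S : Set A}
    (hS : S.Nonempty) {x : A} : x ∈ Ideal.span S ↔ ∃ s ∈ S, s ∣ x := by
  refine ⟨fun hx => ?_, fun ⟨s, hs, hsx⟩ => Ideal.mem_of_dvd _ hsx (Ideal.subset_span hs)⟩
  induction hx using Submodule.span_induction with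
  | mem x hx => exact ⟨x, hx, dvd_rfl⟩
  | zero => exact hS.imp fun s hs => ⟨hs, dvd_zero s⟩
  | smul c x _ hx => exact hx.imp fun s ⟨hs, hsx⟩ => ⟨hs, hsx.mul_left c⟩
  | add x y _ _ hx hy =>
    obtain ⟨s, hs, hsx⟩ := hx
    obtain ⟨t, ht, hty⟩ := hy
    rcases ValuationRing.dvd_total s t with hst | hts
    · exact ⟨s, hs, dvd_add hsx (hst.trans hty)⟩
    · exact ⟨t, ht, dvd_add (hts.trans hsx) hty⟩

variable {K : Type*} [Field K]

theorem valuationSubring_dvd_iff_valuation_le (V : ValuationSubring K) {x y : V} :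
    x ∣ y ↔ V.valuation (y : K) ≤ V.valuation (x : K) := by
  simp only [V.valuation_le_iff, dvd_iff_exists_eq_mul_left, Subtype.ext_iff, MulMemClass.coe_mul,
    eq_comm]

theorem mem_span_algebraMap_iff_exists_valuation_le {R : Type*} [CommRing R] [Algebra R K]
    (I : Ideal R) (V : ValuationSubring K) (hV : ∀ s : R, algebraMap R K s ∈ V) (x : V) :
    x ∈ Ideal.span {x : V | ∃ a ∈ I, (x : K) = algebraMap R K a} ↔
      ∃ a ∈ I, V.valuation (x : K) ≤ V.valuation (algebraMap R K a) := by
  have generators_nonempty : {x : V | ∃ a ∈ I, (x : K) = algebraMap R K a}.Nonempty :=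
    ⟨0, 0, I.zero_mem, by simp⟩
  rw [mem_ideal_span_iff_exists_dvd generators_nonempty]
  constructor
  · rintro ⟨s, ⟨a, ha, hsa⟩, hsx⟩
    exact ⟨a, ha, hsa ▸ (valuationSubring_dvd_iff_valuation_le V).1 hsx⟩
  · rintro ⟨a, ha, hxa⟩
    exact ⟨⟨algebraMap R K a, hV a⟩, ⟨a, ha, rfl⟩, (valuationSubring_dvd_iff_valuation_le V).2 hxa⟩

theorem exists_valuationSubring_map_mem_nonunits {S : Type*} [CommRing S] (g : S →+* K)
    (J : Ideal S) (hJ : ∀ p ∈ J, g p ≠ 1) :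
    ∃ V : ValuationSubring K, (∀ s, g s ∈ V) ∧ ∀ p ∈ J, g p ∈ V.nonunits := by
  have map_ne_top : J.map g.rangeRestrict ≠ ⊤ := by
    rw [Ideal.ne_top_iff_one, Ideal.mem_map_iff_of_surjective _ g.rangeRestrict_surjective]
    rintro ⟨p, hp, hp1⟩
    exact hJ p hp (congrArg Subtype.val hp1)
  obtain ⟨V, hrange, hnonunits⟩ := Ideal.image_subset_nonunits_valuationSubring _ map_ne_top
  exact ⟨V, fun s => hrange ⟨s, rfl⟩,
    fun p hp => hnonunits ⟨g.rangeRestrict p, Ideal.mem_map_of_mem _ hp, rfl⟩⟩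

end ValuationRing

section Valuation

variable {R Γ₀ : Type*} [CommRing R] [LinearOrderedCommGroupWithZero Γ₀] (v : Valuation R Γ₀)
  {I : Ideal R}

theorem valuation_lt_pow_of_mem_ideal_pow {γ : Γ₀} (hI : ∀ a ∈ I, v a < γ) {n : ℕ} (hn : 1 ≤ n) :
    ∀ a ∈ I ^ n, v a < γ ^ n := by
  induction n, hn using Nat.le_induction with
  | base => simpa only [pow_one] using hI
  | succ n _ ih =>
    intro a ha
    rw [pow_succ] at ha ⊢
    induction ha using Submodule.mul_induction_on' with
    | mem_mul_mem b hb c hc =>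
      rw [map_mul]
      exact mul_lt_mul'' (ih b hb) (hI c hc) zero_le zero_le
    | add x _ y _ hx hy => exact v.map_add_lt hx hy

theorem IsIntegralOverIdeal.exists_valuation_le {r : R} (hr : IsIntegralOverIdeal I r) :
    ∃ a ∈ I, v r ≤ v a := by
  by_contra! hlt
  obtain ⟨n, -, a, ha, hsum⟩ := hr
  have hr_pos : 0 < v r := by simpa only [map_zero] using hlt 0 I.zero_mem
  have term_lt : ∀ i ∈ Finset.Icc 1 n, v (a i * r ^ (n - i)) < v r ^ n := fun i hi => by
    obtain ⟨one_le, le_n⟩ := Finset.mem_Icc.1 hi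
    calc v (a i * r ^ (n - i)) = v (a i) * v r ^ (n - i) := by rw [map_mul, map_pow]
      _ < v r ^ i * v r ^ (n - i) := mul_lt_mul_of_pos_right
          (valuation_lt_pow_of_mem_ideal_pow v hlt one_le _ (ha i hi)) (pow_pos hr_pos _)
      _ = v r ^ n := pow_mul_pow_sub _ le_n
  have pow_lt : v (r ^ n) < v r ^ n := by
    rw [eq_neg_of_add_eq_zero_left hsum, v.map_neg]
    exact v.map_sum_lt' (pow_pos hr_pos n) term_lt
  exact pow_lt.ne (map_pow v r n)

end Valuation

section ReesAlgebra

variable {R K : Type*} [CommRing R] [Field K] [Algebra R K] {I : Ideal R} {r : R}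

theorem aeval_inv_mul_pow_natDegree (p : R[X]) {x : K} (hx : x ≠ 0) :
    aeval x⁻¹ p * x ^ p.natDegree =
      ∑ i ∈ Finset.range (p.natDegree + 1),
        algebraMap R K (p.coeff i) * x ^ (p.natDegree - i) := by
  rw [aeval_eq_sum_range, Finset.sum_mul]
  refine Finset.sum_congr rfl fun i hi => ?_
  rw [Algebra.smul_def, mul_assoc, pow_sub₀ x hx (Finset.mem_range_succ_iff.1 hi), inv_pow,
    mul_comm (x ^ _)]

variable [FaithfulSMul R K]

theorem isIntegralOverIdeal_of_aeval_inv_eq_one {p : R[X]} (hp : p ∈ reesAlgebra I)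
    (hp0 : p.coeff 0 = 0) (hr : r ≠ 0) (hp1 : aeval (algebraMap R K r)⁻¹ p = 1) :
    IsIntegralOverIdeal I r := by
  have natDegree_pos : 0 < p.natDegree := by
    refine Nat.pos_of_ne_zero fun hdeg => ?_
    rw [eq_C_of_natDegree_eq_zero hdeg, hp0, C_0, map_zero] at hp1
    exact zero_ne_one hp1
  have pow_eq_sum :
      r ^ p.natDegree = ∑ i ∈ Finset.Icc 1 p.natDegree, p.coeff i * r ^ (p.natDegree - i) := by
    apply FaithfulSMul.algebraMap_injective R K
    have hr' : algebraMap R K r ≠ 0 := by simpa using hr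
    have hsum := aeval_inv_mul_pow_natDegree p hr'
    rw [hp1, one_mul, Finset.range_eq_Ico, Finset.sum_eq_sum_Ico_succ_bot (Nat.succ_pos _), hp0,
      map_zero, zero_mul, zero_add, zero_add, Nat.succ_eq_add_one,
      Finset.Ico_add_one_right_eq_Icc] at hsum
    simpa only [map_sum, map_mul, map_pow] using hsum
  refine ⟨p.natDegree, natDegree_pos, fun i => -p.coeff i, fun i _ => neg_mem (hp i), ?_⟩
  simp only [neg_mul, Finset.sum_neg_distrib, pow_eq_sum, add_neg_cancel]

theorem exists_valuationSubring_valuation_lt (hr : ¬IsIntegralOverIdeal I r) :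
    ∃ V : ValuationSubring K, (∀ s : R, algebraMap R K s ∈ V) ∧
      ∀ a ∈ I, V.valuation (algebraMap R K a) < V.valuation (algebraMap R K r) := by
  have hr0 : r ≠ 0 := fun h => hr (h ▸ isIntegralOverIdeal_zero I)
  have hr0' : algebraMap R K r ≠ 0 := by simpa using hr0
  let evalInv : reesAlgebra I →ₐ[R] K := (aeval (algebraMap R K r)⁻¹).comp (reesAlgebra I).val
  let positivePart : Ideal (reesAlgebra I) :=
    RingHom.ker (constantCoeff.comp (reesAlgebra I).val.toRingHom)
  have evalInv_ne_one : ∀ p ∈ positivePart, evalInv p ≠ 1 := fun p hp hp1 =>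
    hr (isIntegralOverIdeal_of_aeval_inv_eq_one p.2 hp hr0 hp1)
  obtain ⟨V, hV, hnonunits⟩ :=
    exists_valuationSubring_map_mem_nonunits evalInv.toRingHom positivePart evalInv_ne_one
  refine ⟨V, fun s => by simpa using hV (algebraMap R _ s), fun a ha => ?_⟩
  let aT : reesAlgebra I := ⟨monomial 1 a, reesAlgebra.monomial_mem.2 (by rwa [pow_one])⟩
  have aT_mem : aT ∈ positivePart := coeff_monomial_of_ne a zero_ne_one
  have evalInv_aT : evalInv aT = algebraMap R K a / algebraMap R K r := by
    simp [evalInv, aT, aeval_monomial, div_eq_mul_inv]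
  have div_mem : algebraMap R K a / algebraMap R K r ∈ V.nonunits :=
    evalInv_aT ▸ hnonunits aT aT_mem
  rwa [V.mem_nonunits_iff, map_div₀, div_lt_one₀ (V.valuation.pos_iff.2 hr0')] at div_mem

end ReesAlgebra

theorem isIntegralOverIdeal_iff_forall_exists_valuation_le {R K : Type*} [CommRing R] [Field K]
    [Algebra R K] [FaithfulSMul R K] (I : Ideal R) (r : R) :
    IsIntegralOverIdeal I r ↔
      ∀ V : ValuationSubring K, (∀ s : R, algebraMap R K s ∈ V) →
        ∃ a ∈ I, V.valuation (algebraMap R K r) ≤ V.valuation (algebraMap R K a) := by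
  refine ⟨fun hr V _ => hr.exists_valuation_le (V.valuation.comap (algebraMap R K)), ?_⟩
  contrapose!
  exact exists_valuationSubring_valuation_lt

theorem integral_closure_ideal_eq_iInter_valuation_overrings_general {R K : Type*} [CommRing R]
    [Field K] [Algebra R K] [FaithfulSMul R K] (I : Ideal R) (r : R) :
    IsIntegralOverIdeal I r ↔
      ∀ (V : ValuationSubring K) (hV : ∀ s : R, algebraMap R K s ∈ V),
        (⟨algebraMap R K r, hV r⟩ : V) ∈
          Ideal.span {x : V | ∃ a ∈ I, (x : K) = algebraMap R K a} :=
  (isIntegralOverIdeal_iff_forall_exists_valuation_le I r).trans <| forall₂_congr fun V hV =>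
    (mem_span_algebraMap_iff_exists_valuation_le I V hV ⟨algebraMap R K r, hV r⟩).symm

/-- The integral closure of an ideal `I` of an integral domain `R` equals the
intersection, over all valuation overrings `V` of `R` inside the fraction field `K`,
of the contractions `(I·V) ∩ R` of the extensions of `I`. -/
theorem integral_closure_ideal_eq_iInter_valuation_overrings {R K : Type*} [CommRing R]
    [IsDomain R] [Field K] [Algebra R K] [IsFractionRing R K] (I : Ideal R) (r : R) :
    IsIntegralOverIdeal I r ↔
      ∀ (V : ValuationSubring K) (hV : ∀ s : R, algebraMap R K s ∈ V),
        (⟨algebraMap R K r, hV r⟩ : V) ∈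
          Ideal.span {x : V | ∃ a ∈ I, (x : K) = algebraMap R K a} :=
  integral_closure_ideal_eq_iInter_valuation_overrings_general I r
end

section
/- Let R be an integral domain with fraction field K, let v be a valuation on K nonnegative on R, and let I be a v-ideal of R. If A and B are subsets of R such that ab ∈ I for all a ∈ A and b ∈ B, then {a² : a ∈ A} ⊆ I or {b² : b ∈ B} ⊆ I. -/
theorem sq_mem_of_mul_mem_of_dvd {S : Type*} [CommSemiring S] {J : Ideal S} {x y : S}
    (hxy : x * y ∈ J) (hyx : y ∣ x) : x ^ 2 ∈ J :=
  J.mem_of_dvd (sq x ▸ mul_dvd_mul_left x hyx) hxy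

theorem sq_mem_or_sq_mem_of_mul_mem {S : Type*} [CommSemiring S] [PreValuationRing S]
    {J : Ideal S} {x y : S} (hxy : x * y ∈ J) : x ^ 2 ∈ J ∨ y ^ 2 ∈ J :=
  (ValuationRing.dvd_total y x).imp (sq_mem_of_mul_mem_of_dvd hxy)
    (sq_mem_of_mul_mem_of_dvd (mul_comm x y ▸ hxy))

section VIdeal

variable {R K Γ₀ : Type*} [CommRing R] [Field K] [Algebra R K]
  [LinearOrderedCommGroupWithZero Γ₀] {v : Valuation K Γ₀}
  {hv : ∀ r : R, v (algebraMap R K r) ≤ 1} {I : Ideal R}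

theorem IsVIdeal.sq_mem_or_sq_mem (hI : IsVIdeal v hv I) {a b : R}
    (hab : a * b ∈ I) : a ^ 2 ∈ I ∨ b ^ 2 ∈ I := by
  obtain ⟨J, rfl⟩ := hI
  simp only [Ideal.mem_comap, map_mul, map_pow] at hab ⊢
  exact sq_mem_or_sq_mem_of_mul_mem hab

theorem vIdeal_squares_general (hI : IsVIdeal v hv I) {A B : Set R}
    (hAB : ∀ a ∈ A, ∀ b ∈ B, a * b ∈ I) :
    (∀ a ∈ A, a ^ 2 ∈ I) ∨ (∀ b ∈ B, b ^ 2 ∈ I) := by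
  by_contra! ⟨⟨a, haA, ha⟩, ⟨b, hbB, hb⟩⟩
  exact (hI.sq_mem_or_sq_mem (hAB a haA b hbB)).elim ha hb

end VIdeal

/-- If `I` is a `v`-ideal and `A, B ⊆ R` satisfy `a * b ∈ I` for all `a ∈ A`, `b ∈ B`,
then all squares of elements of `A` lie in `I`, or all squares of elements of `B` do. -/
theorem vIdeal_squares {R K Γ₀ : Type*} [CommRing R] [IsDomain R] [Field K] [Algebra R K]
    [IsFractionRing R K] [LinearOrderedCommGroupWithZero Γ₀] (v : Valuation K Γ₀)
    (hv : ∀ r : R, v (algebraMap R K r) ≤ 1) (I : Ideal R) (hI : IsVIdeal v hv I)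
    (A B : Set R) (hAB : ∀ a ∈ A, ∀ b ∈ B, a * b ∈ I) :
    (∀ a ∈ A, a ^ 2 ∈ I) ∨ (∀ b ∈ B, b ^ 2 ∈ I) :=
  vIdeal_squares_general hI hAB
end

section
/- Let R be an integral domain with fraction field K. If every ideal of R is a valuation ideal, then R is itself a valuation ring of K, i.e. for every nonzero x ∈ K, x ∈ R or x⁻¹ ∈ R (equivalently, for all a, b ∈ R, a divides b or b divides a). -/
/-- An ideal `I` of `R` is a *valuation ideal* (with respect to the field `K` of
fractions of `R`) if there exist a valuation overring `V` of `R` in `K` and an ideal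
`J` of `V` such that `I = J ∩ R`. -/
def IsValuationIdeal {R : Type*} (K : Type*) [CommRing R] [Field K] [Algebra R K]
    (I : Ideal R) : Prop :=
  ∃ (V : ValuationSubring K) (hV : ∀ s : R, algebraMap R K s ∈ V) (J : Ideal V),
    ∀ r : R, r ∈ I ↔ (⟨algebraMap R K r, hV r⟩ : V) ∈ J

/-!
If `a * b` lies in an ideal `J` of a valuation ring, then so does `a ^ 2` or `b ^ 2`, because one of
`a`, `b` divides the other. Valuation ideals inherit this property by contraction, and for the
principal ideal `(a * b)` it reads `a * b ∣ a ^ 2` or `a * b ∣ b ^ 2`; now cancel.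
-/

theorem sq_mem_or_sq_mem_of_mul_mem_s14 {V : Type*} [CommSemiring V] [PreValuationRing V]
    {J : Ideal V} {a b : V} (hab : a * b ∈ J) : a ^ 2 ∈ J ∨ b ^ 2 ∈ J := by
  rcases ValuationRing.dvd_total a b with a_dvd_b | b_dvd_a
  · right
    rw [sq]
    exact J.mem_of_dvd (mul_dvd_mul_right a_dvd_b b) hab
  · left
    rw [sq]
    exact J.mem_of_dvd (mul_dvd_mul_left a b_dvd_a) hab

namespace IsValuationIdeal

variable {R K : Type*} [CommRing R] [Field K] [Algebra R K] {I : Ideal R}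

theorem sq_mem_or_sq_mem (hI : IsValuationIdeal K I) {a b : R} (hab : a * b ∈ I) :
    a ^ 2 ∈ I ∨ b ^ 2 ∈ I := by
  obtain ⟨V, hV, J, mem_iff⟩ := hI
  let toV : R →+* V := (algebraMap R K).codRestrict V hV
  obtain rfl : I = J.comap toV := Ideal.ext mem_iff
  simp only [Ideal.mem_comap, map_mul, map_pow] at hab ⊢
  exact sq_mem_or_sq_mem_of_mul_mem_s14 hab

theorem ker_algebraMap_le (hI : IsValuationIdeal K I) : RingHom.ker (algebraMap R K) ≤ I := by
  obtain ⟨V, hV, J, mem_iff⟩ := hI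
  intro r hr
  have image_eq_zero : (⟨algebraMap R K r, hV r⟩ : V) = 0 := Subtype.ext hr
  rw [mem_iff, image_eq_zero]
  exact J.zero_mem

theorem dvd_or_dvd [IsDomain R] {a b : R} (hab : IsValuationIdeal K (Ideal.span {a * b})) :
    a ∣ b ∨ b ∣ a := by
  rcases eq_or_ne a 0 with rfl | ha
  · exact .inr (dvd_zero b)
  rcases eq_or_ne b 0 with rfl | hb
  · exact .inl (dvd_zero a)
  have key := hab.sq_mem_or_sq_mem (Ideal.mem_span_singleton_self (a * b))
  simp only [Ideal.mem_span_singleton, sq] at key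
  rcases key with ab_dvd_aa | ab_dvd_bb
  · exact .inr ((mul_dvd_mul_iff_left ha).1 ab_dvd_aa)
  · exact .inl ((mul_dvd_mul_iff_right hb).1 ab_dvd_bb)

end IsValuationIdeal

theorem valuation_ring_of_all_ideals_valuation_general {R K : Type*} [CommRing R] [Field K]
    [Algebra R K] (h : ∀ r : R, IsValuationIdeal K (Ideal.span {r})) (a b : R) :
    a ∣ b ∨ b ∣ a := by
  have ker_le_bot : RingHom.ker (algebraMap R K) ≤ ⊥ := by
    simpa only [Ideal.span_singleton_zero] using (h 0).ker_algebraMap_le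
  have algebraMap_injective : Function.Injective (algebraMap R K) :=
    (RingHom.injective_iff_ker_eq_bot _).2 (le_bot_iff.1 ker_le_bot)
  have : IsDomain R := algebraMap_injective.isDomain
  exact (h (a * b)).dvd_or_dvd

/-- If every ideal of an integral domain `R` is a valuation ideal, then `R` is itself
a valuation ring: for all `a b : R`, `a ∣ b` or `b ∣ a`. -/
theorem valuation_ring_of_all_ideals_valuation {R K : Type*} [CommRing R] [IsDomain R]
    [Field K] [Algebra R K] [IsFractionRing R K]
    (h : ∀ I : Ideal R, IsValuationIdeal K I) :
    ∀ a b : R, a ∣ b ∨ b ∣ a :=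
  valuation_ring_of_all_ideals_valuation_general fun r => h (Ideal.span {r})
end

section
/- Let R be an integral domain with fraction field K and let v be a valuation on K nonnegative on R. (i) If I_1, …, I_n are v-ideals of R and x_i ∈ R \ I_i for each i ∈ {1, …, n}, then the product x_1⋯x_n does not belong to the product ideal I_1⋯I_n. (ii) If J is a v-ideal of R and I is an ideal of R with I^n ⊆ J^n for some positive integer n, then I ⊆ J. -/
/-!
An element outside a `v`-ideal has, in multiplicative notation, strictly larger valuation than every
element of it. These strict inequalities multiply, and by the ultrametric inequality they survive
sums, so every element of `I₁ ⋯ Iₙ` has strictly smaller valuation than `x₁ ⋯ xₙ`.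
-/

section StrictBounds

variable {R Γ₀ : Type*} [CommRing R] [LinearOrderedCommMonoidWithZero Γ₀]
  (w : Valuation R Γ₀)

theorem valuation_lt_mul_of_mem_mul {I J : Ideal R} {a b : Γ₀} (hI : ∀ x ∈ I, w x < a)
    (hJ : ∀ y ∈ J, w y < b) {z : R} (hz : z ∈ I * J) : w z < a * b := by
  refine Submodule.mul_induction_on hz (fun x hx y hy ↦ ?_) fun _ _ ↦ w.map_add_lt
  rw [map_mul]
  exact mul_lt_mul'' (hI x hx) (hJ y hy) zero_le zero_le

theorem valuation_lt_prod_of_mem_prod {ι : Type*} {s : Finset ι} (hs : s.Nonempty)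
    {I : ι → Ideal R} {c : ι → Γ₀} (hI : ∀ i ∈ s, ∀ x ∈ I i, w x < c i) :
    ∀ z ∈ ∏ i ∈ s, I i, w z < ∏ i ∈ s, c i := by
  induction hs using Finset.Nonempty.cons_induction with
  | singleton i => simpa using hI
  | cons i s _ _ ih =>
    rw [Finset.forall_mem_cons] at hI
    rw [Finset.prod_cons, Finset.prod_cons]
    exact fun _ ↦ valuation_lt_mul_of_mem_mul w hI.1 (ih hI.2)

end StrictBounds

namespace IsVIdeal

variable {R K Γ₀ : Type*} [CommRing R] [Field K] [Algebra R K]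
  [LinearOrderedCommGroupWithZero Γ₀] {v : Valuation K Γ₀}
  {hv : ∀ r : R, v (algebraMap R K r) ≤ 1}

theorem mem_of_valuation_le {I : Ideal R} (hI : IsVIdeal v hv I) {x y : R} (hx : x ∈ I)
    (hyx : v (algebraMap R K y) ≤ v (algebraMap R K x)) : y ∈ I := by
  obtain ⟨J, rfl⟩ := hI
  have hdvd : v.nonnegHom hv x ∣ v.nonnegHom hv y := (Valuation.integer.integers v).dvd_of_le hyx
  exact J.mem_of_dvd hdvd hx

theorem valuation_lt_of_mem_of_notMem {I : Ideal R} (hI : IsVIdeal v hv I) {x y : R} (hx : x ∈ I)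
    (hy : y ∉ I) : v (algebraMap R K x) < v (algebraMap R K y) :=
  lt_of_not_ge fun hyx ↦ hy (hI.mem_of_valuation_le hx hyx)

theorem prod_notMem_prod {ι : Type*} {s : Finset ι} (hs : s.Nonempty) {I : ι → Ideal R}
    (hI : ∀ i ∈ s, IsVIdeal v hv (I i)) {x : ι → R} (hx : ∀ i ∈ s, x i ∉ I i) :
    ∏ i ∈ s, x i ∉ ∏ i ∈ s, I i := by
  intro hmem
  let w := v.comap (algebraMap R K)
  have hlt : w (∏ i ∈ s, x i) < ∏ i ∈ s, w (x i) :=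
    valuation_lt_prod_of_mem_prod w hs
      (fun i hi _ ha ↦ (hI i hi).valuation_lt_of_mem_of_notMem ha (hx i hi)) _ hmem
  exact hlt.ne (map_prod w x s)

theorem pow_notMem_pow {J : Ideal R} (hJ : IsVIdeal v hv J) {x : R} (hx : x ∉ J) {n : ℕ}
    (hn : n ≠ 0) : x ^ n ∉ J ^ n := by
  simpa using prod_notMem_prod (Finset.nonempty_range_iff.2 hn) (fun _ _ ↦ hJ) (fun _ _ ↦ hx)

theorem le_of_pow_le_pow {I J : Ideal R} (hJ : IsVIdeal v hv J) {n : ℕ} (hn : n ≠ 0)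
    (hIJ : I ^ n ≤ J ^ n) : I ≤ J := by
  intro x hx
  by_contra hxJ
  exact hJ.pow_notMem_pow hxJ hn (hIJ (Ideal.pow_mem_pow hx n))

end IsVIdeal

theorem vIdeal_prod_and_pow_general {R K Γ₀ : Type*} [CommRing R] [Field K] [Algebra R K]
    [LinearOrderedCommGroupWithZero Γ₀] (v : Valuation K Γ₀)
    (hv : ∀ r : R, v (algebraMap R K r) ≤ 1) :
    (∀ (n : ℕ), 0 < n → ∀ (I : Fin n → Ideal R), (∀ i, IsVIdeal v hv (I i)) →
      ∀ (x : Fin n → R), (∀ i, x i ∉ I i) → (∏ i, x i) ∉ ∏ i, I i) ∧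
    (∀ (J : Ideal R), IsVIdeal v hv J → ∀ (I : Ideal R) (n : ℕ), 0 < n →
      I ^ n ≤ J ^ n → I ≤ J) := by
  refine ⟨fun n hn I hI x hx ↦ ?_, fun J hJ I n hn ↦ hJ.le_of_pow_le_pow hn.ne'⟩
  have : Nonempty (Fin n) := ⟨⟨0, hn⟩⟩
  exact IsVIdeal.prod_notMem_prod Finset.univ_nonempty (fun i _ ↦ hI i) fun i _ ↦ hx i

/-- (i) If `I₁, …, Iₙ` are `v`-ideals and `xᵢ ∈ R \ Iᵢ` for each `i`, then
`x₁ ⋯ xₙ ∉ I₁ ⋯ Iₙ`.  (ii) If `J` is a `v`-ideal and `Iⁿ ⊆ Jⁿ` for some `n ≥ 1`,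
then `I ⊆ J`. -/
theorem vIdeal_prod_and_pow {R K Γ₀ : Type*} [CommRing R] [IsDomain R] [Field K]
    [Algebra R K] [IsFractionRing R K] [LinearOrderedCommGroupWithZero Γ₀]
    (v : Valuation K Γ₀) (hv : ∀ r : R, v (algebraMap R K r) ≤ 1) :
    (∀ (n : ℕ), 0 < n → ∀ (I : Fin n → Ideal R), (∀ i, IsVIdeal v hv (I i)) →
      ∀ (x : Fin n → R), (∀ i, x i ∉ I i) → (∏ i, x i) ∉ ∏ i, I i) ∧
    (∀ (J : Ideal R), IsVIdeal v hv J → ∀ (I : Ideal R) (n : ℕ), 0 < n →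
      I ^ n ≤ J ^ n → I ≤ J) :=
  vIdeal_prod_and_pow_general v hv
end

section
/- Let R be a valuation domain (an integral domain in which, for all a, b ∈ R, a divides b or b divides a) and let P be a prime ideal of R. Then the intersection of all P-primary ideals of R is a prime ideal of R. -/
/-!
If `x ∉ I` and `y ∉ J` then `I ⊆ (x)`, so `x * y ∈ I * J ⊆ (x) * J` would give `y ∈ J` on
cancelling `x`. Hence the intersection of a family of ideals closed under products is prime as soon
as it is proper. The `P`-primary ideals form such a family: if `Q` is `P`-primary and `b ∉ P`, then
`Q ⊆ (b) * Q`, hence also `Q * J ⊆ (b) * (Q * J)`, and `b` can again be cancelled.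
-/

section PreValuationRing

variable {R : Type*} [CommSemiring R] [PreValuationRing R] {I : Ideal R} {x : R}

theorem le_span_singleton_of_notMem (hx : x ∉ I) : I ≤ Ideal.span {x} := fun q hq =>
  Ideal.mem_span_singleton.mpr <|
    (ValuationRing.dvd_total x q).resolve_right fun hqx => hx (I.mem_of_dvd hqx hq)

theorem le_span_singleton_mul_of_isPrimary (hI : I.IsPrimary) (hx : x ∉ I.radical) :
    I ≤ Ideal.span {x} * I := by
  intro q hq
  obtain ⟨c, rfl⟩ : x ∣ q :=
    Ideal.mem_span_singleton.mp (le_span_singleton_of_notMem hx (Ideal.le_radical hq))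
  have hc : c ∈ I :=
    ((Ideal.isPrimary_iff.mp hI).2 (mul_comm x c ▸ hq)).resolve_right hx
  exact Ideal.mul_mem_mul (Ideal.mem_span_singleton_self x) hc

end PreValuationRing

theorem mul_mem_span_singleton_mul_iff {R : Type*} [CommSemiring R] [IsCancelMulZero R]
    {I : Ideal R} {x y : R} (hx : x ≠ 0) : x * y ∈ Ideal.span {x} * I ↔ y ∈ I := by
  simp [Ideal.mem_span_singleton_mul, hx]

section IsCancelMulZero

variable {R : Type*} [CommSemiring R] [IsCancelMulZero R] [PreValuationRing R]
  {I J : Ideal R} {x y : R}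

theorem mul_notMem_mul (hx : x ∉ I) (hy : y ∉ J) : x * y ∉ I * J := fun hxy =>
  have hx0 : x ≠ 0 := (ne_of_mem_of_not_mem I.zero_mem hx).symm
  hy <| (mul_mem_span_singleton_mul_iff hx0).mp <|
    Ideal.mul_mono_left (le_span_singleton_of_notMem hx) hxy

theorem isPrimary_mul_of_radical_le (hI : I.IsPrimary) (hIJ : I.radical ≤ J.radical) :
    (I * J).IsPrimary := by
  have hrad : (I * J).radical = I.radical := by rw [Ideal.radical_mul, inf_eq_left.mpr hIJ]
  refine Ideal.isPrimary_iff.mpr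
    ⟨ne_top_of_le_ne_top (Ideal.isPrimary_iff.mp hI).1 Ideal.mul_le_left, fun {a b} hab => ?_⟩
  rw [hrad, or_iff_not_imp_right]
  intro hb
  have hb0 : b ≠ 0 := (ne_of_mem_of_not_mem I.radical.zero_mem hb).symm
  have hle : I * J ≤ Ideal.span {b} * (I * J) := by
    rw [← mul_assoc]
    exact Ideal.mul_mono_left (le_span_singleton_mul_of_isPrimary hI hb)
  exact (mul_mem_span_singleton_mul_iff hb0).mp (hle (mul_comm a b ▸ hab))

theorem isPrime_sInf_of_mul_mem {S : Set (Ideal R)} (hproper : ∃ I ∈ S, I ≠ ⊤)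
    (hmul : ∀ I ∈ S, ∀ J ∈ S, I * J ∈ S) : (sInf S).IsPrime := by
  obtain ⟨I₀, hI₀, hI₀top⟩ := hproper
  refine ⟨ne_top_of_le_ne_top hI₀top (sInf_le hI₀), fun {x y} hxy => ?_⟩
  by_contra! ⟨hx, hy⟩
  simp only [Ideal.mem_sInf, not_forall] at hx hy
  obtain ⟨I, hI, hxI⟩ := hx
  obtain ⟨J, hJ, hyJ⟩ := hy
  exact mul_notMem_mul hxI hyJ (Ideal.mem_sInf.mp hxy (hmul I hI J hJ))

theorem sInf_primary_isPrime_of_valuation_domain_general (P : Ideal R) (hP : P.IsPrime) :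
    (sInf {Q : Ideal R | Q.IsPrimary ∧ Q.radical = P}).IsPrime := by
  apply isPrime_sInf_of_mul_mem
  · exact ⟨P, ⟨hP.isPrimary, hP.radical⟩, hP.ne_top⟩
  · rintro I ⟨hI, hIP⟩ J ⟨-, hJP⟩
    exact ⟨isPrimary_mul_of_radical_le hI (hIP.trans hJP.symm).le,
      by rw [Ideal.radical_mul, hIP, hJP, inf_idem]⟩

end IsCancelMulZero

/-- In a valuation domain `R` (an integral domain in which, for all `a b : R`,
`a ∣ b` or `b ∣ a`), the intersection of all `P`-primary ideals, for a prime ideal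
`P`, is a prime ideal. -/
theorem sInf_primary_isPrime_of_valuation_domain {R : Type*} [CommRing R] [IsDomain R]
    (hval : ∀ a b : R, a ∣ b ∨ b ∣ a) (P : Ideal R) (hP : P.IsPrime) :
    (sInf {Q : Ideal R | Q.IsPrimary ∧ Q.radical = P}).IsPrime :=
  have : PreValuationRing R := PreValuationRing.iff_dvd_total.mpr ⟨hval⟩
  sInf_primary_isPrime_of_valuation_domain_general P hP
end

section
/- Let R be an integral domain with fraction field K and let Θ be a nonempty collection of proper valuation ideals of R such that for all I_1, I_2 ∈ Θ there exists I_3 ∈ Θ with I_3 ⊆ I_1 ∩ I_2. Then the radical √(⋂_{I ∈ Θ} I) is a prime ideal of R. -/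
/-- A variant of primality for an ideal, not necessarily proper: whenever `a * b ∈ I`, one of
`a ^ k`, `b ^ k` lies in `I`. Fixing the exponent `k` makes the condition pass to directed
intersections, unlike primality of the radical: each `(x * y, x ^ n, y ^ n)` in `F[x, y]` with
`n ≥ 1` has prime radical, but their intersection `(x * y)` does not. -/
def IsPowPrime {R : Type*} [CommSemiring R] (k : ℕ) (I : Ideal R) : Prop :=
  ∀ ⦃a b : R⦄, a * b ∈ I → a ^ k ∈ I ∨ b ^ k ∈ I

namespace IsPowPrime

variable {R S : Type*} [CommSemiring R] [CommSemiring S] {k : ℕ}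

theorem comap {J : Ideal S} (hJ : IsPowPrime k J) (f : R →+* S) : IsPowPrime k (J.comap f) := by
  intro a b hab
  simp only [Ideal.mem_comap, map_mul, map_pow] at hab ⊢
  exact hJ hab

theorem sInf_of_directedOn {Θ : Set (Ideal R)} (hdir : DirectedOn (· ≥ ·) Θ)
    (hpow : ∀ I ∈ Θ, IsPowPrime k I) : IsPowPrime k (sInf Θ) := by
  intro a b hab
  by_contra! ⟨ha, hb⟩
  simp only [Ideal.mem_sInf, not_forall] at ha hb
  obtain ⟨I₁, hI₁, ha⟩ := ha
  obtain ⟨I₂, hI₂, hb⟩ := hb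
  obtain ⟨I₃, hI₃, hle₁, hle₂⟩ := hdir I₁ hI₁ I₂ hI₂
  rcases hpow I₃ hI₃ (Ideal.mem_sInf.mp hab hI₃) with ha₃ | hb₃
  · exact ha (hle₁ ha₃)
  · exact hb (hle₂ hb₃)

theorem isPrime_radical {I : Ideal R} (hI : IsPowPrime k I) (hne : I ≠ ⊤) :
    I.radical.IsPrime := by
  refine ⟨mt Ideal.radical_eq_top.mp hne, ?_⟩
  rintro a b ⟨n, hab⟩
  rw [mul_pow] at hab
  refine (hI hab).imp (fun ha => ⟨n * k, ?_⟩) (fun hb => ⟨n * k, ?_⟩)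
  · rwa [pow_mul]
  · rwa [pow_mul]

end IsPowPrime

theorem sq_mem_of_mul_mem_of_dvd_s18 {R : Type*} [CommSemiring R] {I : Ideal R} {a b : R}
    (hab : a * b ∈ I) (hdvd : a ∣ b) : b ^ 2 ∈ I := by
  rw [sq]
  exact I.mem_of_dvd (mul_dvd_mul_right hdvd b) hab

theorem isPowPrime_two_of_preValuationRing {V : Type*} [CommSemiring V] [PreValuationRing V]
    (J : Ideal V) : IsPowPrime 2 J := by
  intro a b hab
  rcases ValuationRing.dvd_total a b with hdvd | hdvd
  · exact Or.inr (sq_mem_of_mul_mem_of_dvd_s18 hab hdvd)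
  · exact Or.inl (sq_mem_of_mul_mem_of_dvd_s18 (mul_comm a b ▸ hab) hdvd)

namespace IsValuationIdeal

variable {R K : Type*} [CommRing R] [Field K] [Algebra R K] {I : Ideal R}

theorem exists_eq_comap (hI : IsValuationIdeal K I) :
    ∃ (V : ValuationSubring K) (hV : ∀ s : R, algebraMap R K s ∈ V) (J : Ideal V),
      I = J.comap ((algebraMap R K).codRestrict V hV) := by
  obtain ⟨V, hV, J, hJ⟩ := hI
  exact ⟨V, hV, J, Ideal.ext hJ⟩

theorem isPowPrime_two (hI : IsValuationIdeal K I) : IsPowPrime 2 I := by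
  obtain ⟨V, hV, J, rfl⟩ := hI.exists_eq_comap
  exact (isPowPrime_two_of_preValuationRing J).comap _

end IsValuationIdeal

theorem radical_sInf_valuation_ideals_prime_general {R K : Type*} [CommRing R] [Field K]
    [Algebra R K] {Θ : Set (Ideal R)} (hne : Θ.Nonempty)
    (hval : ∀ I ∈ Θ, I ≠ ⊤ ∧ IsValuationIdeal K I) (hdir : DirectedOn (· ≥ ·) Θ) :
    (sInf Θ).radical.IsPrime := by
  have hpow : IsPowPrime 2 (sInf Θ) :=
    IsPowPrime.sInf_of_directedOn hdir fun I hI => (hval I hI).2.isPowPrime_two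
  have hproper : sInf Θ ≠ ⊤ := by
    obtain ⟨I, hI⟩ := hne
    exact ne_top_of_le_ne_top (hval I hI).1 (sInf_le hI)
  exact hpow.isPrime_radical hproper

/-- If `Θ` is a nonempty, downward-directed collection of proper valuation ideals of
an integral domain `R`, then the radical of `⋂_{I ∈ Θ} I` is a prime ideal of `R`. -/
theorem radical_sInf_valuation_ideals_prime {R K : Type*} [CommRing R] [IsDomain R]
    [Field K] [Algebra R K] [IsFractionRing R K] (Θ : Set (Ideal R))
    (hne : Θ.Nonempty) (hval : ∀ I ∈ Θ, I ≠ ⊤ ∧ IsValuationIdeal K I)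
    (hdir : ∀ I₁ ∈ Θ, ∀ I₂ ∈ Θ, ∃ I₃ ∈ Θ, I₃ ≤ I₁ ⊓ I₂) :
    (sInf Θ).radical.IsPrime :=
  radical_sInf_valuation_ideals_prime_general hne hval fun I₁ h₁ I₂ h₂ =>
    (hdir I₁ h₁ I₂ h₂).imp fun _ h₃ => h₃.imp_right le_inf_iff.mp
end
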